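/- Let 𝒜 be a C*-algebra with a dense *-subalgebra 𝒟, and let f, g be positive functionals on 𝒜 (the restrictions f|_𝒟 and g|_𝒟 are representable positive functionals on the *-algebra 𝒟). Then: (1) f ≤ g if and only if f|_𝒟 ≤ g|_𝒟; (2) f is absolutely continuous with respect to g if and only if f|_𝒟 is absolutely continuous with respect to g|_𝒟. -/

import Mathlib

open scoped ComplexOrder InnerProductSpace

section StarAlgebraDefs

variable {A : Type} [NonUnitalRing A] [Module ℂ A] [SMulCommClass ℂ A A]
  [IsScalarTower ℂ A A] [StarRing A] [StarModule ℂ A]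

/-- A linear functional on a `⋆`-algebra is positive if `0 ≤ f (a⋆ * a)` for every `a`. -/
def IsPosFn (f : A →ₗ[ℂ] ℂ) : Prop := ∀ a : A, 0 ≤ f (star a * a)

/-- Order on positive functionals: `f ≤ g` iff `g - f` is positive. -/
def FnLE (f g : A →ₗ[ℂ] ℂ) : Prop := IsPosFn (g - f)

/-- `f` is induced by a `⋆`-representation on the Hilbert space `H` with a cyclic vector. -/
def IsRepOn (f : A →ₗ[ℂ] ℂ) (H : Type) [NormedAddCommGroup H]
    [InnerProductSpace ℂ H] [CompleteSpace H] : Prop :=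
  ∃ (π : A →⋆ₙₐ[ℂ] (H →L[ℂ] H)) (ξ : H),
    DenseRange (fun a : A => π a ξ) ∧ ∀ a : A, f a = ⟪ξ, π a ξ⟫_ℂ

/-- A positive linear functional is representable if it is induced by a cyclic
`⋆`-representation on some complex Hilbert space. -/
def IsRepresentable (f : A →ₗ[ℂ] ℂ) : Prop :=
  ∃ (H : Type) (_ : NormedAddCommGroup H) (_ : InnerProductSpace ℂ H) (_ : CompleteSpace H),
    IsRepOn f H

/-- Absolute continuity `f ≪ g` for representable positive functionals: `f` is the pointwise
limit of an increasing sequence of representable positive functionals `fₙ` with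
`fₙ ≤ αₙ • g` for some positive reals `αₙ`. -/
def AbsContR (f g : A →ₗ[ℂ] ℂ) : Prop :=
  ∃ (fn : ℕ → (A →ₗ[ℂ] ℂ)) (α : ℕ → ℝ),
    (∀ n, IsRepresentable (fn n) ∧ IsPosFn (fn n)) ∧
    (∀ n, 0 < α n) ∧
    (∀ n, FnLE (fn n) (fn (n + 1))) ∧
    (∀ n, FnLE (fn n) (((α n : ℂ)) • g)) ∧
    (∀ a : A, Filter.Tendsto (fun n => fn n a) Filter.atTop (nhds (f a)))

/-- Singularity `f ⊥ g` for representable positive functionals: the only representable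
positive functional dominated by both `f` and `g` is `0`. -/
def SingularR (f g : A →ₗ[ℂ] ℂ) : Prop :=
  ∀ p : A →ₗ[ℂ] ℂ, IsRepresentable p → IsPosFn p → FnLE p f → FnLE p g → p = 0

/-- `f = fr + fs` is a Lebesgue decomposition of `f` with respect to `g` (representable
positive functionals). -/
def IsLebDecompR (f g fr fs : A →ₗ[ℂ] ℂ) : Prop :=
  IsRepresentable fr ∧ IsPosFn fr ∧ IsRepresentable fs ∧ IsPosFn fs ∧
    f = fr + fs ∧ AbsContR fr g ∧ SingularR fs g

/-- The Lebesgue decomposition of `f` with respect to `g` is unique. -/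
def LebDecompUniqueForR (f g : A →ₗ[ℂ] ℂ) : Prop :=
  ∀ fr fs fr' fs' : A →ₗ[ℂ] ℂ, IsLebDecompR f g fr fs → IsLebDecompR f g fr' fs' →
    fr = fr' ∧ fs = fs'

end StarAlgebraDefs

/-- The Lebesgue decomposition of representable positive functionals over `A` is unique. -/
def LebDecompUniqueR (A : Type) [NonUnitalRing A] [Module ℂ A] [SMulCommClass ℂ A A]
    [IsScalarTower ℂ A A] [StarRing A] [StarModule ℂ A] : Prop :=
  ∀ f g : A →ₗ[ℂ] ℂ, IsRepresentable f → IsPosFn f → IsRepresentable g → IsPosFn g →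
    LebDecompUniqueForR f g

section CStarDefs

variable {A : Type} [NonUnitalCStarAlgebra A]

/-- A linear functional on a C⋆-algebra is positive if `0 ≤ f (a⋆ * a)` for every `a`. -/
def IsPosFnC (f : A →ₗ[ℂ] ℂ) : Prop := ∀ a : A, 0 ≤ f (star a * a)

/-- Order on positive functionals: `f ≤ g` iff `g - f` is positive. -/
def FnLEC (f g : A →ₗ[ℂ] ℂ) : Prop := IsPosFnC (g - f)

/-- Absolute continuity `f ≪ g` for positive functionals on a C⋆-algebra: `f` is the
pointwise limit of an increasing sequence of positive functionals `fₙ` with `fₙ ≤ αₙ • g`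
for some positive reals `αₙ`. -/
def AbsContC (f g : A →ₗ[ℂ] ℂ) : Prop :=
  ∃ (fn : ℕ → (A →ₗ[ℂ] ℂ)) (α : ℕ → ℝ),
    (∀ n, IsPosFnC (fn n)) ∧
    (∀ n, 0 < α n) ∧
    (∀ n, FnLEC (fn n) (fn (n + 1))) ∧
    (∀ n, FnLEC (fn n) (((α n : ℂ)) • g)) ∧
    (∀ a : A, Filter.Tendsto (fun n => fn n a) Filter.atTop (nhds (f a)))

/-- Singularity `f ⊥ g`: the only positive functional dominated by both `f` and `g`
is `0`. -/
def SingularC (f g : A →ₗ[ℂ] ℂ) : Prop :=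
  ∀ p : A →ₗ[ℂ] ℂ, IsPosFnC p → FnLEC p f → FnLEC p g → p = 0

/-- `f = fr + fs` is a Lebesgue decomposition of `f` with respect to `g`. -/
def IsLebDecompC (f g fr fs : A →ₗ[ℂ] ℂ) : Prop :=
  IsPosFnC fr ∧ IsPosFnC fs ∧ f = fr + fs ∧ AbsContC fr g ∧ SingularC fs g

/-- The Lebesgue decomposition of `f` with respect to `g` is unique. -/
def LebDecompUniqueForC (f g : A →ₗ[ℂ] ℂ) : Prop :=
  ∀ fr fs fr' fs' : A →ₗ[ℂ] ℂ, IsLebDecompC f g fr fs → IsLebDecompC f g fr' fs' →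
    fr = fr' ∧ fs = fs'

end CStarDefs

/-- The Lebesgue decomposition of positive functionals over the C⋆-algebra `A` is unique. -/
def LebDecompUniqueC (A : Type) [NonUnitalCStarAlgebra A] : Prop :=
  ∀ f g : A →ₗ[ℂ] ℂ, IsPosFnC f → IsPosFnC g → LebDecompUniqueForC f g

/-- Restriction of a linear functional on `A` to a `⋆`-subalgebra `𝒟 ⊆ A`. -/
def restrictFn {A : Type} [NonUnitalCStarAlgebra A] (D : NonUnitalStarSubalgebra ℂ A)
    (f : A →ₗ[ℂ] ℂ) : ↥D →ₗ[ℂ] ℂ where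
  toFun d := f d
  map_add' x y := by simp
  map_smul' c x := by simp

section Helpers

open Filter Topology

variable {A : Type} [NonUnitalCStarAlgebra A]

/-- Positive functionals are continuous. -/
lemma IsPosFnC.exists_pos [PartialOrder A] [StarOrderedRing A] {f : A →ₗ[ℂ] ℂ}
    (hf : IsPosFnC f) : ∃ P : A →ₚ[ℂ] ℂ, ∀ a, P a = f a := by
  refine ⟨PositiveLinearMap.mk₀ f ?_, fun a => rfl⟩
  intro x hx
  obtain ⟨s, rfl⟩ := CStarAlgebra.nonneg_iff_eq_star_mul_self.mp hx
  exact hf s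

lemma IsPosFnC.bound {f : A →ₗ[ℂ] ℂ} (hf : IsPosFnC f) :
    ∃ C : ℝ, 0 ≤ C ∧ ∀ a, ‖f a‖ ≤ C * ‖a‖ := by
  letI : PartialOrder A := CStarAlgebra.spectralOrder A
  haveI : StarOrderedRing A := CStarAlgebra.spectralOrderedRing A
  obtain ⟨P, hP⟩ := hf.exists_pos
  obtain ⟨C, hC⟩ := PositiveLinearMap.exists_norm_apply_le P
  exact ⟨C, C.2, fun a => by rw [← hP]; exact hC a⟩

lemma IsPosFnC.cont {f : A →ₗ[ℂ] ℂ} (hf : IsPosFnC f) : Continuous f := by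
  obtain ⟨C, -, hC⟩ := hf.bound
  exact (f.mkContinuous C hC).continuous

lemma IsPosFnC.sq_bound {f : A →ₗ[ℂ] ℂ} (hf : IsPosFnC f) {C : ℝ}
    (hC : ∀ a, (f (star a * a)).re ≤ C * ‖a‖ ^ 2) (hC0 : 0 ≤ C) (a : A) :
    ‖f a‖ ≤ √C * √(f (star a * a)).re := by
  letI : PartialOrder A := CStarAlgebra.spectralOrder A
  haveI : StarOrderedRing A := CStarAlgebra.spectralOrderedRing A
  obtain ⟨P, hP⟩ := hf.exists_pos
  have hu := CStarAlgebra.increasingApproximateUnit A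
  have ht : Tendsto (fun e => ‖f (e * a)‖) (CStarAlgebra.approximateUnit A) (𝓝 ‖f a‖) :=
    ((hf.cont.tendsto a).comp (hu.tendsto_mul_right a)).norm
  refine le_of_tendsto ht ?_
  filter_upwards [hu.eventually_norm, hu.eventually_star_eq] with e he hs
  have h1 := norm_inner_le_norm (𝕜 := ℂ) (P.toPreGNS e) (P.toPreGNS a)
  rw [P.preGNS_inner_def, P.preGNS_norm_def, P.preGNS_norm_def] at h1
  simp only [P.ofPreGNS_toPreGNS, hP, hs] at h1
  refine h1.trans ?_
  gcongr
  have h2 := hC e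
  rw [hs] at h2
  refine h2.trans ?_
  nlinarith [norm_nonneg e, mul_le_mul_of_nonneg_left (pow_le_one₀ (n := 2) (norm_nonneg e) he) hC0]

lemma IsPosFnC.le_bound {f : A →ₗ[ℂ] ℂ} {C : ℝ} (hC : ∀ a, ‖f a‖ ≤ C * ‖a‖) (a : A) :
    (f (star a * a)).re ≤ C * ‖a‖ ^ 2 := by
  have := hC (star a * a)
  rw [CStarRing.norm_star_mul_self] at this
  rw [pow_two]
  exact (Complex.re_le_norm _).trans this

/-- Uniform bound for positive functionals dominated by `f`. -/
lemma IsPosFnC.dom_bound {f F : A →ₗ[ℂ] ℂ} (hF : IsPosFnC F) (hle : FnLEC F f) {C : ℝ}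
    (hC0 : 0 ≤ C) (hC : ∀ a, ‖f a‖ ≤ C * ‖a‖) (a : A) : ‖F a‖ ≤ C * ‖a‖ := by
  have h1 : ∀ a, (F (star a * a)).re ≤ C * ‖a‖ ^ 2 := fun a => by
    have h := (Complex.le_def.mp (hle a)).1
    simp only [LinearMap.sub_apply, Complex.sub_re, Complex.zero_re] at h
    linarith [IsPosFnC.le_bound hC a]
  calc ‖F a‖ ≤ √C * √(F (star a * a)).re := hF.sq_bound h1 hC0 a
    _ ≤ √C * √(C * ‖a‖ ^ 2) := by gcongr; exact h1 a
    _ = C * ‖a‖ := by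
      rw [Real.sqrt_mul hC0, Real.sqrt_sq (norm_nonneg a), ← mul_assoc, Real.mul_self_sqrt hC0]

lemma denseRange_val {D : NonUnitalStarSubalgebra ℂ A} (hD : Dense (D : Set A)) :
    DenseRange (fun d : D => (d : A)) := by
  rw [DenseRange]; simpa using hD

/-- Positivity may be checked on a dense `⋆`-subalgebra. -/
lemma posFnC_of_dense {D : NonUnitalStarSubalgebra ℂ A} (hD : Dense (D : Set A))
    {h : A →ₗ[ℂ] ℂ} (hc : Continuous h) (hp : ∀ d : D, 0 ≤ h (star (d : A) * d)) :
    IsPosFnC h := by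
  intro a
  refine (denseRange_val hD).induction_on (p := fun a => 0 ≤ h (star a * a)) a ?_ hp
  exact isClosed_le continuous_const (hc.comp (by fun_prop))

/-- The GNS representation. -/
lemma IsPosFnC.repr {D : NonUnitalStarSubalgebra ℂ A} (hD : Dense (D : Set A))
    {f : A →ₗ[ℂ] ℂ} (hf : IsPosFnC f) : IsRepresentable (restrictFn D f) := by
  letI : PartialOrder A := CStarAlgebra.spectralOrder A
  haveI : StarOrderedRing A := CStarAlgebra.spectralOrderedRing A
  obtain ⟨P, hP⟩ := hf.exists_pos
  obtain ⟨C, hC0, hC⟩ := hf.bound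
  let e : P.PreGNS →ₗ[ℂ] P.GNS := (UniformSpace.Completion.toComplL (𝕜 := ℂ) (E := P.PreGNS)).toLinearMap
  have he : ∀ x, e x = (x : P.GNS) := fun x => rfl
  have hed : DenseRange e := UniformSpace.Completion.denseRange_coe
  let φ : P.PreGNS →ₗ[ℂ] ℂ := f ∘ₗ P.ofPreGNS.toLinearMap
  have hφ : ∀ x, ‖φ x‖ ≤ √C * ‖e x‖ := fun x => by
    rw [he, UniformSpace.Completion.norm_coe, P.preGNS_norm_def, hP]
    exact hf.sq_bound (IsPosFnC.le_bound hC) hC0 _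
  let Φ : P.GNS →L[ℂ] ℂ := φ.extendOfNorm e
  have hΦ : ∀ x : P.PreGNS, Φ x = f (P.ofPreGNS x) := fun x =>
    LinearMap.extendOfNorm_eq hed ⟨_, hφ⟩ x
  let ξ : P.GNS := (InnerProductSpace.toDual ℂ P.GNS).symm Φ
  have hξ : ∀ x : P.GNS, ⟪ξ, x⟫_ℂ = Φ x := fun x => InnerProductSpace.toDual_symm_apply
  let π := P.gnsNonUnitalStarAlgHom
  have hπ : ∀ a, π a ξ = (P.toPreGNS a : P.GNS) := fun a => by
    refine ext_inner_right ℂ fun y => ?_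
    induction y using UniformSpace.Completion.induction_on with
    | hp => apply isClosed_eq <;> fun_prop
    | ih y =>
      rw [← ContinuousLinearMap.adjoint_inner_right, ← ContinuousLinearMap.star_eq_adjoint,
        ← map_star, hξ, P.gnsNonUnitalStarAlgHom_apply_coe, hΦ, UniformSpace.Completion.inner_coe,
        P.preGNS_inner_def, hP]
      rfl
  have hπc : Continuous π :=
    AddMonoidHomClass.continuous_of_bound π 1 fun a => by
      rw [one_mul]; exact NonUnitalStarAlgHom.norm_apply_le π a
  refine ⟨P.GNS, inferInstance, inferInstance, inferInstance,
    π.comp (NonUnitalStarSubalgebraClass.subtype D), ξ, ?_, ?_⟩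
  · have h1 : DenseRange (fun a : A => π a ξ) := by
      have : (fun a : A => π a ξ) = e ∘ P.toPreGNS := by ext1 a; exact hπ a
      rw [this]
      exact hed.comp P.toPreGNS.surjective.denseRange (by
        exact UniformSpace.Completion.continuous_coe _)
    exact h1.comp (denseRange_val hD) (by fun_prop)
  · intro d
    change f d = ⟪ξ, π d ξ⟫_ℂ
    rw [hπ, hξ, hΦ]
    rfl

/-- Extension of representable functionals dominated by `α • g`. -/
lemma exists_ext {D : NonUnitalStarSubalgebra ℂ A} (hD : Dense (D : Set A))
    {g : A →ₗ[ℂ] ℂ} (hg : IsPosFnC g) {F : D →ₗ[ℂ] ℂ} (hF : IsRepresentable F)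
    {α : ℝ} (hα : 0 < α) (hle : FnLE F ((α : ℂ) • restrictFn D g)) :
    ∃ G : A →L[ℂ] ℂ, ∀ d : D, G d = F d := by
  obtain ⟨H, _, _, _, π, ξ, -, hπ⟩ := hF
  obtain ⟨C, hC0, hC⟩ := hg.bound
  let e : D →ₗ[ℂ] A := 
    { toFun := fun d => d, map_add' := fun _ _ => rfl, map_smul' := fun _ _ => rfl }
  have hb : ∀ d, ‖F d‖ ≤ (‖ξ‖ * √(α * C)) * ‖e d‖ := fun d => by
    have h1 : ‖F d‖ ≤ ‖ξ‖ * ‖π d ξ‖ := by rw [hπ]; exact norm_inner_le_norm _ _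
    have h2 : ‖π d ξ‖ ^ 2 = (F (star d * d)).re := by
      rw [hπ, map_mul, map_star, ContinuousLinearMap.star_eq_adjoint,
        ContinuousLinearMap.mul_apply, ContinuousLinearMap.adjoint_inner_right,
        inner_self_eq_norm_sq_to_K]
      norm_cast
    have h3 : (F (star d * d)).re ≤ α * (g (star (d : A) * d)).re := by
      have h := (Complex.le_def.mp (hle d)).1
      simp only [LinearMap.sub_apply, LinearMap.smul_apply, smul_eq_mul, Complex.re_ofReal_mul,
        Complex.sub_re, Complex.zero_re] at h
      change 0 ≤ α * (g (star (d : A) * d)).re - _ at h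
      linarith
    have h4 := IsPosFnC.le_bound hC (d : A)
    have h5 : ‖π d ξ‖ ≤ √(α * C) * ‖(d : A)‖ := by
      rw [← Real.sqrt_sq (norm_nonneg (d : A)), ← Real.sqrt_mul (by positivity)]
      apply Real.le_sqrt_of_sq_le
      nlinarith
    rw [mul_assoc]
    exact h1.trans (by gcongr; exact h5)
  exact ⟨F.extendOfNorm e, fun d => LinearMap.extendOfNorm_eq (denseRange_val hD) ⟨_, hb⟩ d⟩

end Helpers

/-- **Lemma 2.20**: for a C⋆-algebra `𝒜` with a dense `⋆`-subalgebra `𝒟` and positive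
functionals `f, g` on `𝒜`: (1) `f ≤ g` iff `f|𝒟 ≤ g|𝒟`; (2) `f ≪ g` iff
`f|𝒟 ≪ g|𝒟` (as representable positive functionals on `𝒟`). -/
theorem cstar_dense_subalgebra_restriction
    {A : Type} [NonUnitalCStarAlgebra A]
    (D : NonUnitalStarSubalgebra ℂ A) (hD : Dense (D : Set A))
    (f g : A →ₗ[ℂ] ℂ) (hf : IsPosFnC f) (hg : IsPosFnC g) :
    (FnLEC f g ↔ FnLE (restrictFn D f) (restrictFn D g)) ∧
      (AbsContC f g ↔ AbsContR (restrictFn D f) (restrictFn D g)) := by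
  have key : ∀ u v : A →ₗ[ℂ] ℂ, Continuous u → Continuous v →
      (∀ d : D, 0 ≤ v (star (d : A) * d) - u (star (d : A) * d)) → FnLEC u v :=
    fun u v hu hv h => posFnC_of_dense hD (h := v - u) (hv.sub hu) h
  refine ⟨⟨fun h d => h d, fun h => key f g hf.cont hg.cont fun d => h d⟩, ?_, ?_⟩
  · rintro ⟨fn, α, h1, h2, h3, h4, h5⟩
    exact ⟨fun n => restrictFn D (fn n), α, fun n => ⟨(h1 n).repr hD, fun d => h1 n d⟩, h2,
      fun n d => h3 n d, fun n d => h4 n d, fun d => h5 d⟩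
  · rintro ⟨fn, α, h1, h2, h3, h4, h5⟩
    choose G hG using fun n => exists_ext hD hg (h1 n).1 (h2 n) (h4 n)
    have hG' : ∀ n (d : D), G n (star (d : A) * d) = fn n (star d * d) :=
      fun n d => hG n (star d * d)
    have hpos : ∀ n, IsPosFnC (G n).toLinearMap := fun n =>
      posFnC_of_dense hD (G n).continuous fun d => by
        change 0 ≤ G n _
        rw [hG']; exact (h1 n).2 d
    have hlef : ∀ n, FnLEC (G n).toLinearMap f := fun n =>
      key _ _ (G n).continuous hf.cont fun d => by
        change 0 ≤ f (star (d : A) * d) - G n _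
        rw [hG', sub_nonneg]
        have hm : Monotone fun n => fn n (star d * d) :=
          monotone_nat_of_le_succ fun n => sub_nonneg.mp (h3 n d)
        exact hm.ge_of_tendsto (h5 (star d * d)) n
    obtain ⟨C, hC0, hC⟩ := hf.bound
    refine ⟨fun n => (G n).toLinearMap, α, hpos, h2, fun n => ?_, fun n => ?_, fun a => ?_⟩
    · refine key _ _ (G n).continuous (G (n + 1)).continuous fun d => ?_
      change 0 ≤ G (n + 1) _ - G n _
      rw [hG', hG']; exact h3 n d
    · refine key _ _ (G n).continuous (hg.cont.const_smul _) fun d => ?_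
      change 0 ≤ _ - G n _
      rw [hG']; exact h4 n d
    · change Filter.Tendsto (fun n => G n a) Filter.atTop (nhds (f a))
      rw [Metric.tendsto_atTop]
      intro ε hε
      obtain ⟨d, hd⟩ := (denseRange_val hD).exists_dist_lt a (ε := ε / (3 * (C + 1))) (by positivity)
      rw [dist_eq_norm] at hd
      have hd' : C * ‖a - d‖ < ε / 3 := by
        rw [lt_div_iff₀ (by positivity)] at hd
        nlinarith [norm_nonneg (a - (d : A))]
      obtain ⟨N, hN⟩ := Metric.tendsto_atTop.mp (h5 d) (ε / 3) (by positivity)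
      refine ⟨N, fun n hn => ?_⟩
      have e1 := (hpos n).dom_bound (hlef n) hC0 hC (a - d)
      have e2 := hC (a - d)
      have e3 := hN n hn
      change ‖G n (a - d)‖ ≤ _ at e1
      change dist (fn n d) (f d) < _ at e3
      rw [← hG, dist_eq_norm] at e3
      rw [dist_eq_norm]
      have : G n a - f a = G n (a - d) + (G n d - f d) - f (a - d) := by
        rw [map_sub, map_sub]; ring
      rw [this]
      linarith [norm_sub_le (G n (a - d) + (G n d - f d)) (f (a - d)),
        norm_add_le (G n (a - d)) (G n d - f d)]
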